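/- Let s > 5/2. Define, for X = (u,η) ∈ H^s(𝕋) × H^{s-1}(𝕋), G(u,η) = ∂_x (1−∂²_x)^{-1}(½u² + (∂_x u)² + ½η²) and b(X) = (−G(u,η), −η ∂_x u). Then there is a constant C = C(s) > 0 such that for all X = (u,η) and Y = (v,ρ) in H^s(𝕋) × H^{s-1}(𝕋): (i) ‖b(X)‖_{H^s×H^{s-1}} ≤ C (‖u‖_{W^{1,∞}} + ‖η‖_{W^{1,∞}}) ‖(u,η)‖_{H^s×H^{s-1}}, and (ii) ‖b(X) − b(Y)‖_{H^s×H^{s-1}} ≤ C (‖(u,η)‖_{H^s×H^{s-1}} + ‖(v,ρ)‖_{H^s×H^{s-1}}) ‖(u−v, η−ρ)‖_{H^s×H^{s-1}}. -/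

import Mathlib

noncomputable section
open scoped BigOperators

/-- A (complex-valued) function on the torus `𝕋 = ℝ/2πℤ`, represented by its sequence of
Fourier coefficients `f̂ : ℤ → ℂ`. -/
abbrev FC := ℤ → ℂ

namespace FC

/-- The Sobolev weight `(1+k²)^s`. -/
def wt (s : ℝ) (k : ℤ) : ℝ := (1 + (k : ℝ) ^ 2) ^ s

/-- `c` represents a function belonging to the Sobolev space `H^s(𝕋)`. -/
def memHs (s : ℝ) (c : FC) : Prop := Summable fun k : ℤ => wt s k * ‖c k‖ ^ 2

/-- The `H^s(𝕋)` norm: `‖f‖²_{H^s} = Σ_{k∈ℤ} (1+k²)^s |f̂(k)|²`. -/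
def hsNorm (s : ℝ) (c : FC) : ℝ := Real.sqrt (∑' k : ℤ, wt s k * ‖c k‖ ^ 2)

/-- The `H^s(𝕋)` inner product `(f,g)_{H^s} = Σ_{k∈ℤ} (1+k²)^s f̂(k) conj(ĝ(k))`
(its real part; the sum is real for real-valued functions). -/
def hsInner (s : ℝ) (c d : FC) : ℝ :=
  (∑' k : ℤ, ((wt s k : ℂ) * (c k * (starRingEnd ℂ) (d k)))).re

/-- `c` represents a real-valued function (conjugate-symmetric coefficients). -/
def isReal (c : FC) : Prop := ∀ k : ℤ, c (-k) = (starRingEnd ℂ) (c k)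

/-- The derivative `∂ₓ`, i.e. the Fourier multiplier `ik`. -/
def D1 (c : FC) : FC := fun k => Complex.I * (k : ℂ) * c k

/-- The pointwise product of functions, i.e. convolution of Fourier coefficients. -/
def mul (c d : FC) : FC := fun k => ∑' j : ℤ, c j * d (k - j)

/-- The represented function, evaluated at `x ∈ ℝ`. -/
def eval (c : FC) (x : ℝ) : ℂ := ∑' k : ℤ, c k * Complex.exp (Complex.I * (k : ℂ) * (x : ℂ))

/-- The `L^∞` norm (supremum of the represented periodic function over ℝ). -/
def linfty (c : FC) : ℝ := ⨆ x : ℝ, ‖eval c x‖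

/-- The `W^{1,∞}` norm. -/
def w1infty (c : FC) : ℝ := linfty c + linfty (D1 c)

/-- A Fourier multiplier operator with real symbol `m`. -/
def mult (m : ℤ → ℝ) (c : FC) : FC := fun k => (m k : ℂ) * c k

/-- The operator `(1-∂ₓ²)⁻¹`, i.e. the Fourier multiplier `(1+k²)⁻¹`. -/
def helmInv : FC → FC := mult fun k => (1 + (k : ℝ) ^ 2)⁻¹

/-- The operator `1-∂ₓ²`, i.e. the Fourier multiplier `1+k²`. -/
def helm : FC → FC := mult fun k => 1 + (k : ℝ) ^ 2

/-- The operator `T̃_ε = (1-ε²∂ₓ²)⁻¹`, i.e. the Fourier multiplier `(1+ε²k²)⁻¹`. -/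
def T (ε : ℝ) : FC → FC := mult fun k => (1 + ε ^ 2 * (k : ℝ) ^ 2)⁻¹

/-- The periodic Hilbert transform, i.e. the Fourier multiplier `-i·sgn(k)`. -/
def hilbert (c : FC) : FC := fun k => -Complex.I * (Int.sign k : ℂ) * c k

/-- The Friedrichs-type mollifier `J_ε`, the Fourier multiplier `ĵ(εk)`. -/
def Jmol (jhat : ℝ → ℝ) (ε : ℝ) : FC → FC := mult fun k => jhat (ε * (k : ℝ))

/-- The generalized Lie derivative `𝓛_ξ f = ξ ∂ₓ f + (∂ₓ ξ) f`. -/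
def lie (ξ c : FC) : FC := mul ξ (D1 c) + mul (D1 ξ) c

/-- `𝓛²_ξ f = 𝓛_ξ (𝓛_ξ f)`. -/
def lie2 (ξ c : FC) : FC := lie ξ (lie ξ c)

/-- The coefficientwise sum `Σ_{k∈ℕ} F k` of a sequence of functions. -/
def tsumFC (F : ℕ → FC) : FC := fun m => ∑' k : ℕ, F k m

/-- The norm on the product space `H^{s₁}×H^{s₂}`. -/
def pairNorm (s₁ s₂ : ℝ) (c d : FC) : ℝ := Real.sqrt (hsNorm s₁ c ^ 2 + hsNorm s₂ d ^ 2)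

/-- The inner product on the product space `H^{s₁}×H^{s₂}`:
`((c₁,d₁),(c₂,d₂)) ↦ (c₁,c₂)_{H^{s₁}} + (d₁,d₂)_{H^{s₂}}`. -/
def pairInner (s₁ s₂ : ℝ) (c₁ d₁ c₂ d₂ : FC) : ℝ := hsInner s₁ c₁ c₂ + hsInner s₂ d₁ d₂

end FC

/-- `G(u,η) = ∂ₓ(1-∂ₓ²)⁻¹(½u² + uₓ² + ½η²)`. -/
def Gfun (u η : FC) : FC :=
  FC.D1 (FC.helmInv
    ((1 / 2 : ℝ) • FC.mul u u + FC.mul (FC.D1 u) (FC.D1 u) + (1 / 2 : ℝ) • FC.mul η η))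

/-!
Both estimates reduce to bounds for products in `H^{s-1}`: `∂ₓ(1-∂ₓ²)⁻¹` gains one derivative and
`∂ₓ` loses one, so every component of `b(u, η)` is controlled in its space by the `H^{s-1}` norms
of `u²`, `uₓ²`, `η²` and `η uₓ`.

The growth bound is the Moser estimate `‖fg‖_{H^σ} ≲ ‖f‖_{H^σ} ‖g‖_{L^∞} + ‖f‖_{L^∞} ‖g‖_{H^σ}` for
`σ > 0`. If `S_n` truncates smoothly to frequencies below `2^n` and `Δ_n = S_{n+1} - S_n`, then
telescoping `S_n f · S_n g` writes `fg` as the sum of the paraproducts `∑ Δ_n f · S_{n+1} g` and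
`∑ S_n f · Δ_n g`, whose `n`-th terms have frequencies `≲ 2^n`. Since `σ > 0`, Cauchy–Schwarz
against a geometric series bounds such sums in `H^σ` by their blocks in `L²`. What remains is that
`S_n` is bounded on `L^∞` uniformly in `n`: its kernel is a product of two Dirichlet kernels, so by
Cauchy–Schwarz and Parseval its `L¹` norm is at most `√3`.

The Lipschitz bound follows by polarization, because `b` is quadratic and `H^{s-1} ⊂ L^∞` is an
algebra.
-/

namespace FC

open MeasureTheory AddCircle Filter Topology

section Multipliers

lemma norm_mult_apply (m : ℤ → ℝ) (c : FC) (k : ℤ) : ‖mult m c k‖ = |m k| * ‖c k‖ := by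
  rw [mult, norm_mul, Complex.norm_real, Real.norm_eq_abs]

lemma mult_add (m : ℤ → ℝ) (c d : FC) : mult m (c + d) = mult m c + mult m d :=
  funext fun _ => mul_add _ _ _

lemma mult_smul (m : ℤ → ℝ) (r : ℝ) (c : FC) : mult m (r • c) = r • mult m c :=
  funext fun k => mul_smul_comm r (m k : ℂ) (c k)

lemma D1_sub (c d : FC) : D1 (c - d) = D1 c - D1 d :=
  funext fun _ => mul_sub _ _ _

lemma norm_D1_apply (c : FC) (k : ℤ) : ‖D1 c k‖ = |(k : ℝ)| * ‖c k‖ := by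
  simp [D1]

lemma D1_helmInv_add (c d : FC) : D1 (helmInv (c + d)) = D1 (helmInv c) + D1 (helmInv d) := by
  rw [helmInv, mult_add]
  exact funext fun _ => mul_add _ _ _

end Multipliers

section SobolevNorm

variable {σ τ : ℝ} {c d : FC}

lemma wt_pos (σ : ℝ) (k : ℤ) : 0 < wt σ k := by
  unfold wt; positivity

lemma wt_eq_mul (σ : ℝ) (k : ℤ) : wt σ k = (1 + (k : ℝ) ^ 2) * wt (σ - 1) k := by
  rw [wt, wt, Real.rpow_sub_one (by positivity)]
  field_simp

lemma wt_mono (h : σ ≤ τ) (k : ℤ) : wt σ k ≤ wt τ k :=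
  Real.rpow_le_rpow_of_exponent_le (by nlinarith [sq_nonneg (k : ℝ)]) h

lemma wt_mul_sq_nonneg (σ : ℝ) (c : FC) (k : ℤ) : 0 ≤ wt σ k * ‖c k‖ ^ 2 :=
  mul_nonneg (wt_pos σ k).le (sq_nonneg _)

lemma hsNorm_nonneg (σ : ℝ) (c : FC) : 0 ≤ hsNorm σ c :=
  Real.sqrt_nonneg _

lemma hsNorm_sq (σ : ℝ) (c : FC) : hsNorm σ c ^ 2 = ∑' k, wt σ k * ‖c k‖ ^ 2 :=
  Real.sq_sqrt (tsum_nonneg (wt_mul_sq_nonneg σ c))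

lemma memHs.sum_le (hc : memHs σ c) (F : Finset ℤ) :
    ∑ k ∈ F, wt σ k * ‖c k‖ ^ 2 ≤ hsNorm σ c ^ 2 := by
  rw [hsNorm_sq]
  exact Summable.sum_le_tsum F (fun k _ => wt_mul_sq_nonneg σ c k) hc

lemma memHs_of_sum_le {B : ℝ} (h : ∀ F : Finset ℤ, ∑ k ∈ F, wt σ k * ‖c k‖ ^ 2 ≤ B) :
    memHs σ c :=
  summable_of_sum_le (wt_mul_sq_nonneg σ c) h

lemma hsNorm_sq_le_of_sum_le {B : ℝ} (h : ∀ F : Finset ℤ, ∑ k ∈ F, wt σ k * ‖c k‖ ^ 2 ≤ B) :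
    hsNorm σ c ^ 2 ≤ B := by
  rw [hsNorm_sq]
  exact (memHs_of_sum_le h).tsum_le_of_sum_le h

lemma memHs.of_le (hd : memHs τ d) (h : ∀ k, wt σ k * ‖c k‖ ^ 2 ≤ wt τ k * ‖d k‖ ^ 2) :
    memHs σ c :=
  Summable.of_nonneg_of_le (wt_mul_sq_nonneg σ c) h hd

lemma hsNorm_le_of_le (hd : memHs τ d) (h : ∀ k, wt σ k * ‖c k‖ ^ 2 ≤ wt τ k * ‖d k‖ ^ 2) :
    hsNorm σ c ≤ hsNorm τ d :=
  Real.sqrt_le_sqrt ((hd.of_le h).tsum_le_tsum h hd)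

lemma norm_mult_sqrt_wt_sq (σ : ℝ) (c : FC) (k : ℤ) :
    ‖mult (fun k => √(wt σ k)) c k‖ ^ 2 = wt σ k * ‖c k‖ ^ 2 := by
  rw [norm_mult_apply, mul_pow, sq_abs, Real.sq_sqrt (wt_pos σ k).le]

lemma memHs_iff_memℓp :
    memHs σ c ↔ Memℓp (E := fun _ : ℤ => ℂ) (mult (fun k => √(wt σ k)) c) 2 := by
  rw [memℓp_gen_iff (by simp)]
  simp only [ENNReal.toReal_ofNat, Real.rpow_ofNat, norm_mult_sqrt_wt_sq, memHs]

/-- The isometric identification of `H^σ` with `ℓ²(ℤ)`, through which the Hilbert space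
structure of `ℓ²` is transported to `hsNorm σ`. -/
def memHs.toL2 (hc : memHs σ c) : lp (fun _ : ℤ => ℂ) 2 :=
  ⟨mult (fun k => √(wt σ k)) c, memHs_iff_memℓp.1 hc⟩

lemma memHs.norm_toL2 (hc : memHs σ c) : ‖hc.toL2‖ = hsNorm σ c := by
  have h := lp.norm_rpow_eq_tsum (p := 2) (by simp) hc.toL2
  simp only [ENNReal.toReal_ofNat, Real.rpow_ofNat, memHs.toL2, norm_mult_sqrt_wt_sq] at h
  rw [hsNorm, ← h, Real.sqrt_sq (norm_nonneg _), memHs.toL2]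

lemma memHs.add (hc : memHs σ c) (hd : memHs σ d) : memHs σ (c + d) := by
  rw [memHs_iff_memℓp, mult_add]
  exact (memHs_iff_memℓp.1 hc).add (memHs_iff_memℓp.1 hd)

lemma memHs.const_smul (hc : memHs σ c) (r : ℝ) : memHs σ (r • c) := by
  rw [memHs_iff_memℓp, mult_smul]
  exact (memHs_iff_memℓp.1 hc).const_smul r

lemma memHs.neg (hc : memHs σ c) : memHs σ (-c) := by
  simpa only [memHs, Pi.neg_apply, norm_neg] using hc

lemma memHs.sub (hc : memHs σ c) (hd : memHs σ d) : memHs σ (c - d) :=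
  sub_eq_add_neg c d ▸ hc.add hd.neg

lemma hsNorm_neg (σ : ℝ) (c : FC) : hsNorm σ (-c) = hsNorm σ c := by
  simp only [hsNorm, Pi.neg_apply, norm_neg]

lemma hsNorm_smul (σ r : ℝ) (c : FC) : hsNorm σ (r • c) = |r| * hsNorm σ c := by
  simp only [hsNorm, Pi.smul_apply, norm_smul, Real.norm_eq_abs, mul_pow, mul_left_comm _ (|r| ^ 2)]
  rw [tsum_mul_left, Real.sqrt_mul (sq_nonneg _), Real.sqrt_sq (abs_nonneg r)]

lemma hsNorm_add_le (hc : memHs σ c) (hd : memHs σ d) :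
    hsNorm σ (c + d) ≤ hsNorm σ c + hsNorm σ d := by
  have h : (hc.add hd).toL2 = hc.toL2 + hd.toL2 := Subtype.ext (mult_add _ c d)
  rw [← (hc.add hd).norm_toL2, ← hc.norm_toL2, ← hd.norm_toL2, h]
  exact norm_add_le _ _

lemma memHs.mono (hc : memHs τ c) (h : σ ≤ τ) : memHs σ c :=
  hc.of_le fun k => mul_le_mul_of_nonneg_right (wt_mono h k) (sq_nonneg _)

lemma hsNorm_mono (hc : memHs τ c) (h : σ ≤ τ) : hsNorm σ c ≤ hsNorm τ c :=
  hsNorm_le_of_le hc fun k => mul_le_mul_of_nonneg_right (wt_mono h k) (sq_nonneg _)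

lemma wt_mul_D1_sq_le (σ : ℝ) (c : FC) (k : ℤ) :
    wt (σ - 1) k * ‖D1 c k‖ ^ 2 ≤ wt σ k * ‖c k‖ ^ 2 := by
  rw [wt_eq_mul σ, norm_D1_apply, mul_pow, sq_abs]
  nlinarith [wt_mul_sq_nonneg (σ - 1) c k]

lemma memHs.D1 (hc : memHs σ c) : memHs (σ - 1) (D1 c) :=
  hc.of_le (wt_mul_D1_sq_le σ c)

lemma hsNorm_D1_le (hc : memHs σ c) : hsNorm (σ - 1) (D1 c) ≤ hsNorm σ c :=
  hsNorm_le_of_le hc (wt_mul_D1_sq_le σ c)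

lemma wt_mul_D1_helmInv_sq_le (σ : ℝ) (c : FC) (k : ℤ) :
    wt σ k * ‖D1 (helmInv c) k‖ ^ 2 ≤ wt (σ - 1) k * ‖c k‖ ^ 2 := by
  have hk : 0 < 1 + (k : ℝ) ^ 2 := by positivity
  have symbol_le : (k : ℝ) ^ 2 / (1 + (k : ℝ) ^ 2) ≤ 1 := (div_le_one hk).2 (by linarith)
  calc wt σ k * ‖D1 (helmInv c) k‖ ^ 2
      = (k : ℝ) ^ 2 / (1 + (k : ℝ) ^ 2) * (wt (σ - 1) k * ‖c k‖ ^ 2) := by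
        rw [wt_eq_mul σ, norm_D1_apply, helmInv, norm_mult_apply, abs_of_pos (inv_pos.2 hk),
          mul_pow, sq_abs, mul_pow]
        field_simp
    _ ≤ wt (σ - 1) k * ‖c k‖ ^ 2 := mul_le_of_le_one_left (wt_mul_sq_nonneg _ c k) symbol_le

lemma memHs.D1_helmInv (hc : memHs (σ - 1) c) : memHs σ (FC.D1 (helmInv c)) :=
  hc.of_le (wt_mul_D1_helmInv_sq_le σ c)

lemma hsNorm_D1_helmInv_le (hc : memHs (σ - 1) c) :
    hsNorm σ (D1 (helmInv c)) ≤ hsNorm (σ - 1) c :=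
  hsNorm_le_of_le hc (wt_mul_D1_helmInv_sq_le σ c)

lemma wt_mul_mult_sq_le {m : ℤ → ℝ} (hm : ∀ k, |m k| ≤ 1) (σ : ℝ) (c : FC) (k : ℤ) :
    wt σ k * ‖mult m c k‖ ^ 2 ≤ wt σ k * ‖c k‖ ^ 2 := by
  have h : ‖mult m c k‖ ≤ ‖c k‖ := by
    rw [norm_mult_apply]
    exact mul_le_of_le_one_left (norm_nonneg _) (hm k)
  have := (wt_pos σ k).le
  gcongr

lemma memHs.mult {m : ℤ → ℝ} (hm : ∀ k, |m k| ≤ 1) (hc : memHs σ c) : memHs σ (mult m c) :=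
  hc.of_le (wt_mul_mult_sq_le hm σ c)

lemma memHs_and_hsNorm_sq_le_of_tendsto {a : ℕ → FC} {B : ℝ}
    (hlim : ∀ k, Tendsto (fun n => a n k) atTop (𝓝 (c k))) (ha : ∀ n, memHs σ (a n))
    (hB : ∀ n, hsNorm σ (a n) ^ 2 ≤ B) : memHs σ c ∧ hsNorm σ c ^ 2 ≤ B := by
  have partial_sum_le (F : Finset ℤ) : ∑ k ∈ F, wt σ k * ‖c k‖ ^ 2 ≤ B :=
    le_of_tendsto' (tendsto_finsetSum F fun k _ => ((hlim k).norm.pow 2).const_mul _)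
      fun n => ((ha n).sum_le F).trans (hB n)
  exact ⟨memHs_of_sum_le partial_sum_le, hsNorm_sq_le_of_sum_le partial_sum_le⟩

section PairNorm

variable {s₁ s₂ : ℝ}

lemma pairNorm_nonneg (s₁ s₂ : ℝ) (c d : FC) : 0 ≤ pairNorm s₁ s₂ c d :=
  Real.sqrt_nonneg _

lemma pairNorm_neg (s₁ s₂ : ℝ) (c d : FC) : pairNorm s₁ s₂ (-c) (-d) = pairNorm s₁ s₂ c d := by
  rw [pairNorm, pairNorm, hsNorm_neg, hsNorm_neg]

lemma hsNorm_le_pairNorm_left (s₁ s₂ : ℝ) (c d : FC) : hsNorm s₁ c ≤ pairNorm s₁ s₂ c d :=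
  Real.le_sqrt_of_sq_le (le_add_of_nonneg_right (sq_nonneg _))

lemma hsNorm_le_pairNorm_right (s₁ s₂ : ℝ) (c d : FC) : hsNorm s₂ d ≤ pairNorm s₁ s₂ c d :=
  Real.le_sqrt_of_sq_le (le_add_of_nonneg_left (sq_nonneg _))

lemma pairNorm_le_add (s₁ s₂ : ℝ) (c d : FC) :
    pairNorm s₁ s₂ c d ≤ hsNorm s₁ c + hsNorm s₂ d := by
  have hc := hsNorm_nonneg s₁ c
  have hd := hsNorm_nonneg s₂ d
  exact Real.sqrt_le_iff.2 ⟨by positivity, by nlinarith [mul_nonneg hc hd]⟩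

end PairNorm

end SobolevNorm

section Convolution

variable {a b c d : FC}

/-- Membership in the Wiener algebra: the Fourier coefficients are absolutely summable, so that
the Fourier series of `c` converges uniformly. -/
def memWiener (c : FC) : Prop := Summable fun k : ℤ => ‖c k‖

lemma memWiener.of_le (hc : memWiener c) (h : ∀ k, ‖a k‖ ≤ ‖c k‖) : memWiener a :=
  Summable.of_nonneg_of_le (fun _ => norm_nonneg _) h hc

lemma memWiener.mult {m : ℤ → ℝ} (hm : ∀ k, |m k| ≤ 1) (hc : memWiener c) :
    memWiener (mult m c) :=
  hc.of_le fun k => (norm_mult_apply m c k).trans_le (mul_le_of_le_one_left (norm_nonneg _) (hm k))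

/-- The change of variables `(k, j) ↦ (j, k - j)`, which turns the terms of a product of two
series into the terms of the convolution, grouped by `k`. -/
def convEquiv : ℤ × ℤ ≃ ℤ × ℤ where
  toFun p := (p.2, p.1 - p.2)
  invFun p := (p.1 + p.2, p.1)
  left_inv p := by ext <;> simp
  right_inv p := by ext <;> simp

lemma memWiener.summable_norm_prod (ha : memWiener a) (hc : memWiener c) :
    Summable fun p : ℤ × ℤ => ‖a p.2 * c (p.1 - p.2)‖ :=
  ((Summable.mul_norm ha hc).comp_injective convEquiv.injective).congr fun _ => rfl

lemma memWiener.summable_norm_conv (ha : memWiener a) (hc : memWiener c) (k : ℤ) :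
    Summable fun j => ‖a j * c (k - j)‖ :=
  (ha.summable_norm_prod hc).prod_factor k

lemma memWiener.mul (ha : memWiener a) (hc : memWiener c) : memWiener (mul a c) :=
  Summable.of_nonneg_of_le (fun _ => norm_nonneg _)
    (fun k => norm_tsum_le_tsum_norm (ha.summable_norm_conv hc k)) (ha.summable_norm_prod hc).prod

lemma tsum_mul (ha : memWiener a) (hc : memWiener c) :
    ∑' k, mul a c k = (∑' k, a k) * ∑' k, c k := by
  rw [tsum_mul_tsum_of_summable_norm ha hc, ← convEquiv.tsum_eq]
  exact ((ha.summable_norm_prod hc).of_norm.tsum_prod).symm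

protected lemma mul_comm (a c : FC) : mul a c = mul c a := by
  ext k
  rw [mul, ← (Equiv.subLeft k).tsum_eq]
  exact tsum_congr fun j => by rw [Equiv.subLeft_apply, sub_sub_cancel, mul_comm]

lemma mul_sub_left (ha : memWiener a) (hb : memWiener b) (hc : memWiener c) :
    mul (a - b) c = mul a c - mul b c := by
  ext k
  simp only [mul, Pi.sub_apply, sub_mul]
  exact (ha.summable_norm_conv hc k).of_norm.tsum_sub (hb.summable_norm_conv hc k).of_norm

lemma mul_sub_right (ha : memWiener a) (hb : memWiener b) (hc : memWiener c) :
    mul a (b - c) = mul a b - mul a c := by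
  simp only [FC.mul_comm a, mul_sub_left hb hc ha]

lemma mul_sub_mul (ha : memWiener a) (hb : memWiener b) (hc : memWiener c) (hd : memWiener d) :
    mul a b - mul c d = mul (a - c) b + mul c (b - d) := by
  rw [mul_sub_left ha hc hb, mul_sub_right hc hb hd, sub_add_sub_cancel]

lemma mul_eq_zero_of_add_le_abs {K L k : ℤ} (ha : ∀ j, K ≤ |j| → a j = 0)
    (hc : ∀ j, L ≤ |j| → c j = 0) (hk : K + L ≤ |k|) : mul a c k = 0 := by
  refine (tsum_congr fun j => ?_).trans tsum_zero
  rcases le_or_gt K |j| with hj | hj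
  · rw [ha j hj, zero_mul]
  · rw [hc (k - j) (by linarith [abs_sub_abs_le_abs_sub k j]), mul_zero]

lemma tendsto_mul_mult {m : ℕ → ℤ → ℝ} (hm : ∀ n k, |m n k| ≤ 1)
    (hlim : ∀ k, Tendsto (fun n => m n k) atTop (𝓝 1)) (ha : memWiener a) (hc : memWiener c)
    (k : ℤ) : Tendsto (fun n => mul (mult (m n) a) (mult (m n) c) k) atTop (𝓝 (mul a c k)) := by
  have mult_tendsto (b : FC) (j : ℤ) : Tendsto (fun n => mult (m n) b j) atTop (𝓝 (b j)) := by
    simpa [mult] using ((Complex.continuous_ofReal.tendsto 1).comp (hlim j)).mul_const (b j)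
  have norm_mult_le (b : FC) (n : ℕ) (j : ℤ) : ‖mult (m n) b j‖ ≤ ‖b j‖ :=
    (norm_mult_apply _ b j).trans_le (mul_le_of_le_one_left (norm_nonneg _) (hm n j))
  refine tendsto_tsum_of_dominated_convergence (ha.summable_norm_conv hc k)
    (fun j => (mult_tendsto a j).mul (mult_tendsto c (k - j)))
    (Eventually.of_forall fun n j => ?_)
  rw [norm_mul, norm_mul]
  exact mul_le_mul (norm_mult_le a n j) (norm_mult_le c n _) (norm_nonneg _) (norm_nonneg _)

end Convolution

section Evaluation

variable {a c : FC}

/-- The translate `y ↦ c (x + y)`, on the Fourier side a modulation of the coefficients. -/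
def translate (x : ℝ) (c : FC) : FC :=
  fun k => c k * Complex.exp (Complex.I * (k : ℂ) * (x : ℂ))

lemma eval_eq_tsum_translate (c : FC) (x : ℝ) : eval c x = ∑' k, translate x c k := rfl

lemma eval_translate (c : FC) (x y : ℝ) : eval (translate x c) y = eval c (x + y) := by
  refine tsum_congr fun k => ?_
  rw [translate, mul_assoc, ← Complex.exp_add, Complex.ofReal_add, mul_add]

lemma norm_translate_apply (x : ℝ) (c : FC) (k : ℤ) : ‖translate x c k‖ = ‖c k‖ := by
  have exponent_eq : Complex.I * (k : ℂ) * (x : ℂ) = ((k * x : ℝ) : ℂ) * Complex.I := by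
    push_cast; ring
  rw [translate, norm_mul, exponent_eq, Complex.norm_exp_ofReal_mul_I, mul_one]

lemma memWiener.translate (hc : memWiener c) (x : ℝ) : memWiener (translate x c) :=
  hc.of_le fun k => (norm_translate_apply x c k).le

lemma translate_mul (x : ℝ) (a c : FC) :
    translate x (mul a c) = mul (translate x a) (translate x c) := by
  ext k
  rw [translate, mul, ← tsum_mul_right]
  refine tsum_congr fun j => ?_
  rw [translate, translate, mul_mul_mul_comm, ← Complex.exp_add]
  congr 2
  push_cast
  ring

lemma translate_mult (x : ℝ) (m : ℤ → ℝ) (c : FC) :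
    translate x (mult m c) = mult m (translate x c) :=
  funext fun _ => mul_assoc _ _ _

lemma eval_mul (ha : memWiener a) (hc : memWiener c) (x : ℝ) :
    eval (mul a c) x = eval a x * eval c x := by
  simp only [eval_eq_tsum_translate, translate_mul, tsum_mul (ha.translate x) (hc.translate x)]

lemma norm_eval_le_tsum (hc : memWiener c) (x : ℝ) : ‖eval c x‖ ≤ ∑' k, ‖c k‖ := by
  rw [eval_eq_tsum_translate]
  exact (norm_tsum_le_tsum_norm (hc.translate x)).trans_eq
    (tsum_congr fun k => norm_translate_apply x c k)

lemma norm_eval_le_linfty (hc : memWiener c) (x : ℝ) : ‖eval c x‖ ≤ linfty c :=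
  le_ciSup ⟨∑' k, ‖c k‖, Set.forall_mem_range.2 (norm_eval_le_tsum hc)⟩ x

lemma linfty_nonneg (c : FC) : 0 ≤ linfty c :=
  Real.iSup_nonneg fun _ => norm_nonneg _

lemma linfty_le_tsum (hc : memWiener c) : linfty c ≤ ∑' k, ‖c k‖ :=
  ciSup_le (norm_eval_le_tsum hc)

lemma linfty_translate_le (hc : memWiener c) (x : ℝ) : linfty (translate x c) ≤ linfty c :=
  ciSup_le fun y => eval_translate c x y ▸ norm_eval_le_linfty hc (x + y)

end Evaluation

section Parseval

variable {a c : FC}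

/-- The continuous function on `ℝ/ℤ` whose Fourier coefficients are `c`; the junk value `0` is
taken when the Fourier series does not converge uniformly. -/
def toContinuousMap (c : FC) : C(UnitAddCircle, ℂ) := ∑' k : ℤ, c k • fourier k

lemma memWiener.summable_smul_fourier (hc : memWiener c) :
    Summable fun k : ℤ => c k • (fourier k : C(UnitAddCircle, ℂ)) :=
  Summable.of_norm (by simpa only [memWiener, norm_smul, fourier_norm, mul_one] using hc)

lemma toContinuousMap_coe (hc : memWiener c) (x : ℝ) :
    toContinuousMap c (x : UnitAddCircle) = eval c (2 * Real.pi * x) := by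
  rw [toContinuousMap, ← ContinuousMap.tsum_apply hc.summable_smul_fourier, eval]
  refine tsum_congr fun k => ?_
  rw [ContinuousMap.smul_apply, smul_eq_mul, fourier_coe_apply]
  congr 2
  push_cast
  ring

lemma memWiener.memℓp_two (hc : memWiener c) : Memℓp (E := fun _ : ℤ => ℂ) c 2 :=
  Memℓp.of_exponent_ge
    ((memℓp_gen_iff (by simp)).2
      (by simpa only [memWiener, ENNReal.toReal_one, Real.rpow_one] using hc))
    one_le_two

lemma toLp_toContinuousMap (hc : memWiener c) :
    ContinuousMap.toLp 2 haarAddCircle ℂ (toContinuousMap c) =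
      fourierBasis.repr.symm ⟨c, hc.memℓp_two⟩ := by
  have series := hc.summable_smul_fourier.hasSum.mapL (ContinuousMap.toLp 2 haarAddCircle ℂ)
  simp only [map_smul] at series
  have basis_series := (fourierBasis (T := 1)).hasSum_repr_symm ⟨c, hc.memℓp_two⟩
  rw [coe_fourierBasis] at basis_series
  exact series.unique basis_series

lemma hasSum_norm_sq (hc : memWiener c) :
    HasSum (fun k => ‖c k‖ ^ 2) (∫ t, ‖toContinuousMap c t‖ ^ 2 ∂haarAddCircle) := by
  have coeff_eq (k : ℤ) :
      fourierCoeff (T := 1) (ContinuousMap.toLp 2 haarAddCircle ℂ (toContinuousMap c)) k = c k := by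
    rw [← fourierBasis_repr, toLp_toContinuousMap hc, LinearIsometryEquiv.apply_symm_apply]
  have h := hasSum_sq_fourierCoeff (ContinuousMap.toLp 2 haarAddCircle ℂ (toContinuousMap c))
  simp only [coeff_eq] at h
  convert h using 1
  refine integral_congr_ae ?_
  filter_upwards [ContinuousMap.coeFn_toLp (p := 2) haarAddCircle (𝕜 := ℂ) (toContinuousMap c)]
    with t ht
  rw [ht]

lemma wt_zero (k : ℤ) : wt 0 k = 1 :=
  Real.rpow_zero _

lemma memWiener.memHs_zero (hc : memWiener c) : memHs 0 c := by
  simpa only [memHs, wt_zero, one_mul] using (hasSum_norm_sq hc).summable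

lemma hsNorm_zero_sq_eq_integral (hc : memWiener c) :
    hsNorm 0 c ^ 2 = ∫ t, ‖toContinuousMap c t‖ ^ 2 ∂haarAddCircle := by
  simpa only [hsNorm_sq, wt_zero, one_mul] using (hasSum_norm_sq hc).tsum_eq

lemma hsNorm_zero_mul_le (ha : memWiener a) (hc : memWiener c) :
    hsNorm 0 (mul a c) ≤ hsNorm 0 a * linfty c := by
  have pointwise (t : UnitAddCircle) :
      ‖toContinuousMap (mul a c) t‖ ^ 2 ≤ ‖toContinuousMap a t‖ ^ 2 * linfty c ^ 2 := by
    induction t using QuotientAddGroup.induction_on with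
    | H x =>
      rw [toContinuousMap_coe (ha.mul hc), toContinuousMap_coe ha, eval_mul ha hc, norm_mul,
        mul_pow]
      gcongr
      exact norm_eval_le_linfty hc _
  have integrable_sq (b : FC) :
      Integrable (fun t => ‖toContinuousMap b t‖ ^ 2) haarAddCircle :=
    Continuous.integrable_of_hasCompactSupport (by fun_prop) (.of_compactSpace _)
  refine le_of_sq_le_sq ?_ (mul_nonneg (hsNorm_nonneg 0 a) (linfty_nonneg c))
  rw [mul_pow, hsNorm_zero_sq_eq_integral (ha.mul hc), hsNorm_zero_sq_eq_integral ha,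
    ← integral_mul_const]
  exact integral_mono (integrable_sq _) ((integrable_sq _).mul_const _) pointwise

end Parseval

section OverlapMultipliers

variable {c : FC} {A B : Finset ℤ}

/-- The number of ways to write `m` as a difference of an element of `B` and an element of `A`.
As the symbol of a multiplier it has for kernel the product of the conjugate of the trigonometric
sum over `A` with the trigonometric sum over `B`. -/
def overlap (A B : Finset ℤ) (m : ℤ) : ℝ := (A.filter fun j => j + m ∈ B).card

lemma memWiener_indicator_one (A : Finset ℤ) : memWiener ((A : Set ℤ).indicator 1) :=
  summable_of_ne_finset_zero (s := A) fun k hk => by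
    rw [Set.indicator_of_notMem (Finset.mem_coe.not.2 hk), norm_zero]

lemma hsNorm_zero_indicator_one_sq (A : Finset ℤ) :
    hsNorm 0 ((A : Set ℤ).indicator 1) ^ 2 = A.card := by
  rw [hsNorm_sq, tsum_eq_sum (s := A)]
  · rw [Finset.sum_congr rfl fun k hk => by
      rw [wt_zero, Set.indicator_of_mem (Finset.mem_coe.2 hk), Pi.one_apply, norm_one, one_pow,
        one_mul], Finset.sum_const, nsmul_one]
  · intro k hk
    rw [Set.indicator_of_notMem (Finset.mem_coe.not.2 hk), norm_zero, sq, mul_zero, mul_zero]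

lemma mul_indicator_one (A : Finset ℤ) (c : FC) (l : ℤ) :
    mul ((A : Set ℤ).indicator 1) c l = ∑ j ∈ A, c (l - j) := by
  rw [mul, tsum_eq_sum (s := A)]
  · exact Finset.sum_congr rfl fun j hj => by
      rw [Set.indicator_of_mem (Finset.mem_coe.2 hj), Pi.one_apply, one_mul]
  · intro j hj
    rw [Set.indicator_of_notMem (Finset.mem_coe.not.2 hj), zero_mul]

lemma mult_overlap_apply (A B : Finset ℤ) (c : FC) (k : ℤ) :
    mult (overlap A B) c k = ∑ l ∈ B, ∑ j ∈ A, if k = l - j then c (l - j) else 0 := by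
  have inner_sum (j : ℤ) :
      (∑ l ∈ B, if k = l - j then c (l - j) else 0) = if j + k ∈ B then c k else 0 := by
    rw [← Finset.sum_ite_eq' B (j + k) fun _ => c k]
    refine Finset.sum_congr rfl fun l _ => ?_
    rcases eq_or_ne l (j + k) with rfl | h
    · simp
    · rw [if_neg h, if_neg fun hk => h (by omega)]
  rw [Finset.sum_comm, Finset.sum_congr rfl fun j _ => inner_sum j, ← Finset.sum_filter,
    Finset.sum_const, nsmul_eq_mul, mult, overlap, Complex.ofReal_natCast]

lemma tsum_mult_overlap (A B : Finset ℤ) (c : FC) :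
    ∑' k, mult (overlap A B) c k = ∑ l ∈ B, mul ((A : Set ℤ).indicator 1) c l := by
  have summable_ite (l j : ℤ) : Summable fun k => if k = l - j then c (l - j) else 0 :=
    (hasSum_ite_eq _ _).summable
  simp only [mult_overlap_apply, mul_indicator_one]
  rw [Summable.tsum_finsetSum fun l _ => summable_sum fun j _ => summable_ite l j]
  refine Finset.sum_congr rfl fun l _ => ?_
  rw [Summable.tsum_finsetSum fun j _ => summable_ite l j]
  exact Finset.sum_congr rfl fun j _ => tsum_ite_eq _ _

lemma norm_tsum_mult_overlap_le (A B : Finset ℤ) (hc : memWiener c) :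
    ‖∑' k, mult (overlap A B) c k‖ ≤ √(A.card * B.card) * linfty c := by
  set g := mul ((A : Set ℤ).indicator 1) c
  have hg : memWiener g := (memWiener_indicator_one A).mul hc
  have hsNorm_g_le : hsNorm 0 g ≤ hsNorm 0 ((A : Set ℤ).indicator 1) * linfty c :=
    hsNorm_zero_mul_le (memWiener_indicator_one A) hc
  have sum_sq_le : (∑ l ∈ B, ‖g l‖) ^ 2 ≤ (A.card * B.card) * linfty c ^ 2 := calc
    (∑ l ∈ B, ‖g l‖) ^ 2 ≤ B.card * ∑ l ∈ B, ‖g l‖ ^ 2 := sq_sum_le_card_mul_sum_sq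
    _ ≤ B.card * hsNorm 0 g ^ 2 := by
      gcongr
      simpa only [wt_zero, one_mul] using hg.memHs_zero.sum_le B
    _ ≤ B.card * (hsNorm 0 ((A : Set ℤ).indicator 1) * linfty c) ^ 2 := by
      have := hsNorm_nonneg 0 g
      gcongr
    _ = (A.card * B.card) * linfty c ^ 2 := by
      rw [mul_pow, hsNorm_zero_indicator_one_sq]
      ring
  rw [tsum_mult_overlap]
  refine (norm_sum_le _ _).trans (le_of_sq_le_sq ?_ ?_)
  · rwa [mul_pow, Real.sq_sqrt (by positivity)]
  · exact mul_nonneg (Real.sqrt_nonneg _) (linfty_nonneg c)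

lemma linfty_mult_overlap_le (A B : Finset ℤ) (hc : memWiener c) :
    linfty (mult (overlap A B) c) ≤ √(A.card * B.card) * linfty c := by
  refine ciSup_le fun x => ?_
  rw [eval_eq_tsum_translate, translate_mult]
  refine (norm_tsum_mult_overlap_le A B (hc.translate x)).trans ?_
  gcongr
  exact linfty_translate_le hc x

end OverlapMultipliers

section LowPass

variable {c : FC}

lemma linfty_mult_smul (r : ℝ) (m : ℤ → ℝ) (c : FC) :
    linfty (mult (r • m) c) = |r| * linfty (mult m c) := by
  rw [linfty, linfty, Real.mul_iSup_of_nonneg (abs_nonneg r)]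
  refine congrArg _ (funext fun x => ?_)
  rw [← Real.norm_eq_abs, ← Complex.norm_real, ← norm_mul, eval, eval, ← tsum_mul_left]
  refine congrArg _ (tsum_congr fun k => ?_)
  simp only [mult, Pi.smul_apply, smul_eq_mul, Complex.ofReal_mul]
  ring

/-- The de la Vallée-Poussin symbol, a trapezoid which is `1` on `[-N, N]` and `0` outside
`(-2N, 2N)`. Writing it as an overlap of two intervals exhibits its kernel as a product of two
Dirichlet kernels. -/
def vallee (N : ℕ) : ℤ → ℝ := (N : ℝ)⁻¹ • overlap (Finset.Ico 0 (N : ℤ)) (Finset.Ico (-N) (2 * N))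

lemma vallee_eq_one {N : ℕ} (hN : N ≠ 0) {k : ℤ} (hk : |k| ≤ N) : vallee N k = 1 := by
  have filter_eq : ((Finset.Ico 0 (N : ℤ)).filter fun j => j + k ∈ Finset.Ico (-(N : ℤ)) (2 * N)) =
      Finset.Ico 0 (N : ℤ) :=
    Finset.filter_true_of_mem fun j hj => by
      rw [abs_le] at hk
      rw [Finset.mem_Ico] at hj ⊢
      omega
  rw [vallee, Pi.smul_apply, overlap, filter_eq, Int.card_Ico, sub_zero, Int.toNat_natCast,
    smul_eq_mul, inv_mul_cancel₀ (Nat.cast_ne_zero.2 hN)]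

lemma vallee_eq_zero {N : ℕ} {k : ℤ} (hk : 2 * (N : ℤ) ≤ |k|) : vallee N k = 0 := by
  have filter_eq : ((Finset.Ico 0 (N : ℤ)).filter fun j => j + k ∈ Finset.Ico (-(N : ℤ)) (2 * N)) =
      ∅ :=
    Finset.filter_false_of_mem fun j hj => by
      rw [le_abs] at hk
      rw [Finset.mem_Ico] at hj ⊢
      omega
  rw [vallee, Pi.smul_apply, overlap, filter_eq, Finset.card_empty, Nat.cast_zero, smul_zero]

lemma vallee_mem_Icc (N : ℕ) (k : ℤ) : vallee N k ∈ Set.Icc 0 1 := by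
  have card_le := Finset.card_filter_le (Finset.Ico 0 (N : ℤ))
    fun j => j + k ∈ Finset.Ico (-(N : ℤ)) (2 * N)
  rw [Int.card_Ico, sub_zero, Int.toNat_natCast] at card_le
  rw [vallee, Pi.smul_apply, smul_eq_mul, inv_mul_eq_div, overlap]
  exact ⟨by positivity, div_le_one_of_le₀ (Nat.cast_le.2 card_le) (Nat.cast_nonneg N)⟩

lemma linfty_mult_vallee_le (N : ℕ) (hc : memWiener c) :
    linfty (mult (vallee N) c) ≤ √3 * linfty c := by
  have card_eq : ((Finset.Ico 0 (N : ℤ)).card : ℝ) * (Finset.Ico (-(N : ℤ)) (2 * N)).card =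
      3 * (N : ℝ) ^ 2 := by
    rw [Int.card_Ico, Int.card_Ico, sub_zero, Int.toNat_natCast,
      show (2 * N - -N : ℤ) = (3 * N : ℕ) by push_cast; ring, Int.toNat_natCast]
    push_cast
    ring
  have overlap_le := linfty_mult_overlap_le (Finset.Ico 0 (N : ℤ)) (Finset.Ico (-N) (2 * N)) hc
  rw [card_eq, Real.sqrt_mul (by norm_num), Real.sqrt_sq (Nat.cast_nonneg N)] at overlap_le
  calc linfty (mult (vallee N) c)
      = (N : ℝ)⁻¹ * linfty (mult (overlap (Finset.Ico 0 (N : ℤ)) (Finset.Ico (-N) (2 * N))) c) := by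
        rw [vallee, linfty_mult_smul, abs_of_nonneg (by positivity)]
    _ ≤ (N : ℝ)⁻¹ * (√3 * N * linfty c) := by gcongr
    _ = (N : ℝ)⁻¹ * N * (√3 * linfty c) := by ring
    _ ≤ √3 * linfty c :=
        mul_le_of_le_one_left (mul_nonneg (Real.sqrt_nonneg 3) (linfty_nonneg c)) inv_mul_le_one

/-- The symbol of the smooth truncation to frequencies `|k| < 2 ^ n`, for `n > 0` a
de la Vallée-Poussin symbol. The truncation of index `0` is `0`, so that the dyadic blocks sum up
to the identity. -/
def lowPass : ℕ → ℤ → ℝ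
  | 0 => 0
  | n + 1 => vallee (2 ^ n)

lemma lowPass_mem_Icc (n : ℕ) (k : ℤ) : lowPass n k ∈ Set.Icc 0 1 := by
  cases n with
  | zero => exact ⟨le_rfl, zero_le_one⟩
  | succ n => exact vallee_mem_Icc _ k

lemma abs_lowPass_le_one (n : ℕ) (k : ℤ) : |lowPass n k| ≤ 1 :=
  abs_le.2 ⟨by linarith [(lowPass_mem_Icc n k).1], (lowPass_mem_Icc n k).2⟩

lemma lowPass_eq_zero {n : ℕ} {k : ℤ} (hk : 2 ^ n ≤ |k|) : lowPass n k = 0 := by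
  cases n with
  | zero => rfl
  | succ n => exact vallee_eq_zero (by push_cast; rwa [← pow_succ'])

lemma lowPass_succ_eq_one {n : ℕ} {k : ℤ} (hk : |k| ≤ 2 ^ n) : lowPass (n + 1) k = 1 :=
  vallee_eq_one (by positivity) (by exact_mod_cast hk)

lemma tendsto_lowPass (k : ℤ) : Tendsto (fun n => lowPass n k) atTop (𝓝 1) := by
  refine tendsto_const_nhds.congr' ?_
  filter_upwards [eventually_gt_atTop k.natAbs] with n hn
  obtain ⟨n, rfl⟩ := Nat.exists_eq_succ_of_ne_zero (Nat.ne_zero_of_lt hn)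
  refine (lowPass_succ_eq_one ?_).symm
  rw [Int.abs_eq_natAbs]
  exact_mod_cast (Nat.le_of_lt_succ hn).trans Nat.lt_two_pow_self.le

lemma linfty_mult_lowPass_le (n : ℕ) (hc : memWiener c) :
    linfty (mult (lowPass n) c) ≤ √3 * linfty c := by
  cases n with
  | zero =>
    simpa [linfty, eval, mult, lowPass] using linfty_nonneg c
  | succ n => exact linfty_mult_vallee_le _ hc

/-- The symbol of the projection to the dyadic block of frequencies `|k| ~ 2 ^ n`. -/
def block (n : ℕ) : ℤ → ℝ := lowPass (n + 1) - lowPass n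

lemma mult_block (n : ℕ) (c : FC) :
    mult (block n) c = mult (lowPass (n + 1)) c - mult (lowPass n) c := by
  ext k
  simp only [mult, block, Pi.sub_apply, Complex.ofReal_sub, sub_mul]

lemma abs_block_le_one (n : ℕ) (k : ℤ) : |block n k| ≤ 1 := by
  have h := lowPass_mem_Icc n k
  have h' := lowPass_mem_Icc (n + 1) k
  exact abs_sub_le_of_nonneg_of_le h'.1 h'.2 h.1 h.2

lemma block_eq_zero {n : ℕ} {k : ℤ} (hk : 2 ^ (n + 1) ≤ |k|) : block n k = 0 := by
  rw [block, Pi.sub_apply, lowPass_eq_zero hk,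
    lowPass_eq_zero ((pow_le_pow_right₀ one_le_two n.le_succ).trans hk), sub_zero]

lemma block_succ_eq_zero {n : ℕ} {k : ℤ} (hk : |k| ≤ 2 ^ n) : block (n + 1) k = 0 := by
  rw [block, Pi.sub_apply, lowPass_succ_eq_one hk,
    lowPass_succ_eq_one (hk.trans (pow_le_pow_right₀ one_le_two n.le_succ)), sub_self]

end LowPass

section DyadicSums

variable {σ : ℝ}

lemma pow_mul_sq_sum_range_le {q : ℝ} (hq : 1 < q) {m : ℕ} {x : ℕ → ℝ}
    (hx : ∀ n < m, x n = 0) (N : ℕ) :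
    q ^ m * (∑ n ∈ Finset.range N, x n) ^ 2 ≤
      (1 - q⁻¹)⁻¹ * ∑ n ∈ Finset.range N, q ^ n * x n ^ 2 := by
  have hq0 : 0 < q := one_pos.trans hq
  have sum_eq : ∑ n ∈ Finset.range N, x n = ∑ n ∈ Finset.Ico m N, x n :=
    (Finset.sum_subset (fun n hn => Finset.mem_range.2 (Finset.mem_Ico.1 hn).2)
      fun n hn hn' => hx n (by grind)).symm
  have cauchy_schwarz : (∑ n ∈ Finset.Ico m N, x n) ^ 2 ≤
      (∑ n ∈ Finset.Ico m N, q⁻¹ ^ n) * ∑ n ∈ Finset.Ico m N, q ^ n * x n ^ 2 :=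
    Finset.sum_sq_le_sum_mul_sum_of_sq_le_mul _ (fun _ _ => by positivity)
      (fun _ _ => by positivity) fun n _ => by
        rw [← mul_assoc, ← mul_pow, inv_mul_cancel₀ hq0.ne', one_pow, one_mul]
  calc q ^ m * (∑ n ∈ Finset.range N, x n) ^ 2
      ≤ q ^ m * ((q⁻¹ ^ m / (1 - q⁻¹)) * ∑ n ∈ Finset.range N, q ^ n * x n ^ 2) := by
        rw [sum_eq]
        gcongr
        refine cauchy_schwarz.trans (mul_le_mul ?_ ?_ (by positivity) ?_)
        · exact geom_sum_Ico_le_of_lt_one (by positivity) (inv_lt_one_of_one_lt₀ hq)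
        · exact Finset.sum_le_sum_of_subset_of_nonneg
            (fun n hn => Finset.mem_range.2 (Finset.mem_Ico.1 hn).2) fun _ _ _ => by positivity
        · have := sub_pos.2 (inv_lt_one_of_one_lt₀ hq)
          positivity
    _ = (1 - q⁻¹)⁻¹ * ∑ n ∈ Finset.range N, q ^ n * x n ^ 2 := by
        rw [inv_pow]
        field_simp

lemma wt_mul_norm_sum_sq_le (hσ : 0 < σ) {R : ℝ} (hR : 0 ≤ R) {h : ℕ → FC}
    {k : ℤ} (hsupp : ∀ n, h n k ≠ 0 → 1 + (k : ℝ) ^ 2 ≤ R * 4 ^ n) (N : ℕ) :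
    wt σ k * ‖(∑ n ∈ Finset.range N, h n) k‖ ^ 2 ≤
      R ^ σ * (1 - ((4 : ℝ) ^ σ)⁻¹)⁻¹ * ∑ n ∈ Finset.range N, ((4 : ℝ) ^ σ) ^ n * ‖h n k‖ ^ 2 := by
  have hq : 1 < (4 : ℝ) ^ σ := Real.one_lt_rpow (by norm_num) hσ
  have inv_pos : 0 < (1 - ((4 : ℝ) ^ σ)⁻¹)⁻¹ := inv_pos.2 (sub_pos.2 (inv_lt_one_of_one_lt₀ hq))
  classical
  by_cases hk : ∃ n, h n k ≠ 0
  · have wt_le : wt σ k ≤ R ^ σ * ((4 : ℝ) ^ σ) ^ Nat.find hk := by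
      rw [Real.rpow_pow_comm (by norm_num), ← Real.mul_rpow hR (by positivity)]
      exact Real.rpow_le_rpow (by positivity) (hsupp _ (Nat.find_spec hk)) hσ.le
    have norm_eq_zero (n : ℕ) (hn : n < Nat.find hk) : ‖h n k‖ = 0 := by
      rw [norm_eq_zero, not_not.1 (Nat.find_min hk hn)]
    calc wt σ k * ‖(∑ n ∈ Finset.range N, h n) k‖ ^ 2
        ≤ R ^ σ * ((4 : ℝ) ^ σ) ^ Nat.find hk * (∑ n ∈ Finset.range N, ‖h n k‖) ^ 2 := by
          rw [Finset.sum_apply]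
          gcongr
          exact norm_sum_le _ _
      _ ≤ _ := by
          rw [mul_assoc, mul_assoc]
          exact mul_le_mul_of_nonneg_left (pow_mul_sq_sum_range_le hq norm_eq_zero N)
            (Real.rpow_nonneg hR σ)
  · push Not at hk
    rw [Finset.sum_apply, Finset.sum_eq_zero fun n _ => hk n, norm_zero, sq, mul_zero, mul_zero]
    positivity

lemma memHs_and_hsNorm_sq_sum_le (hσ : 0 < σ) {R : ℝ} (hR : 0 ≤ R) {h : ℕ → FC}
    (hh : ∀ n, memHs 0 (h n)) (hsupp : ∀ n k, h n k ≠ 0 → 1 + (k : ℝ) ^ 2 ≤ R * 4 ^ n) (N : ℕ) :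
    memHs σ (∑ n ∈ Finset.range N, h n) ∧ hsNorm σ (∑ n ∈ Finset.range N, h n) ^ 2 ≤
      R ^ σ * (1 - ((4 : ℝ) ^ σ)⁻¹)⁻¹ *
        ∑ n ∈ Finset.range N, ((4 : ℝ) ^ σ) ^ n * hsNorm 0 (h n) ^ 2 := by
  have hq : 1 < (4 : ℝ) ^ σ := Real.one_lt_rpow (by norm_num) hσ
  have inv_pos : 0 < (1 - ((4 : ℝ) ^ σ)⁻¹)⁻¹ := inv_pos.2 (sub_pos.2 (inv_lt_one_of_one_lt₀ hq))
  have partial_sum_le (F : Finset ℤ) :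
      ∑ k ∈ F, wt σ k * ‖(∑ n ∈ Finset.range N, h n) k‖ ^ 2 ≤
        R ^ σ * (1 - ((4 : ℝ) ^ σ)⁻¹)⁻¹ *
          ∑ n ∈ Finset.range N, ((4 : ℝ) ^ σ) ^ n * hsNorm 0 (h n) ^ 2 := by
    refine (Finset.sum_le_sum fun k _ => wt_mul_norm_sum_sq_le hσ hR (hsupp · k) N).trans ?_
    rw [← Finset.mul_sum, Finset.sum_comm]
    simp only [← Finset.mul_sum]
    gcongr with n
    simpa only [wt_zero, one_mul] using (hh n).sum_le F
  exact ⟨memHs_of_sum_le partial_sum_le, hsNorm_sq_le_of_sum_le partial_sum_le⟩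

lemma sum_pow_mul_block_sq_le (hσ : 0 < σ) (N : ℕ) (k : ℤ) :
    ∑ n ∈ Finset.range N, ((4 : ℝ) ^ σ) ^ n * block n k ^ 2 ≤
      ((4 : ℝ) ^ σ) ^ 2 / ((4 : ℝ) ^ σ - 1) * wt σ k := by
  have hq : 1 < (4 : ℝ) ^ σ := Real.one_lt_rpow (by norm_num) hσ
  have : 0 < (4 : ℝ) ^ σ - 1 := sub_pos.2 hq
  obtain ⟨m, hm, hm'⟩ := exists_nat_pow_near
    (show (1 : ℝ) ≤ 1 + (k : ℝ) ^ 2 by nlinarith [sq_nonneg (k : ℝ)]) (by norm_num : (1 : ℝ) < 4)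
  have block_vanishes (n : ℕ) (hn : m + 2 ≤ n) : block n k = 0 := by
    obtain ⟨n, rfl⟩ := Nat.exists_eq_succ_of_ne_zero (n := n) (by omega)
    refine block_succ_eq_zero ((?_ : |k| ≤ 2 ^ (m + 1)).trans
      (pow_le_pow_right₀ one_le_two (by omega)))
    refine abs_le_of_sq_le_sq ?_ (by positivity)
    rw [← pow_mul, mul_comm, pow_mul]
    exact_mod_cast (by linarith : (k : ℝ) ^ 2 ≤ 4 ^ (m + 1))
  calc ∑ n ∈ Finset.range N, ((4 : ℝ) ^ σ) ^ n * block n k ^ 2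
      ≤ ∑ n ∈ Finset.range (m + 2), ((4 : ℝ) ^ σ) ^ n * block n k ^ 2 :=
        sum_le_hasSum (L := SummationFilter.unconditional ℕ) _ (fun n _ => by positivity) <|
          hasSum_sum_of_ne_finset_zero fun n hn => by
            rw [block_vanishes n (by simpa using hn), sq, mul_zero, mul_zero]
    _ ≤ ∑ n ∈ Finset.range (m + 2), ((4 : ℝ) ^ σ) ^ n := by
        gcongr with n
        exact mul_le_of_le_one_right (by positivity) ((sq_le_one_iff_abs_le_one _).2
          (abs_block_le_one n k))
    _ ≤ ((4 : ℝ) ^ σ) ^ (m + 2) / ((4 : ℝ) ^ σ - 1) := by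
        rw [geom_sum_eq hq.ne']
        gcongr
        linarith
    _ = ((4 : ℝ) ^ σ) ^ 2 / ((4 : ℝ) ^ σ - 1) * (4 ^ m : ℝ) ^ σ := by
        rw [← Real.rpow_pow_comm (by norm_num)]
        ring
    _ ≤ ((4 : ℝ) ^ σ) ^ 2 / ((4 : ℝ) ^ σ - 1) * wt σ k := by
        rw [wt]
        gcongr

lemma sum_pow_mul_hsNorm_block_sq_le (hσ : 0 < σ) {f : FC} (hf : memHs σ f) (N : ℕ) :
    ∑ n ∈ Finset.range N, ((4 : ℝ) ^ σ) ^ n * hsNorm 0 (mult (block n) f) ^ 2 ≤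
      ((4 : ℝ) ^ σ) ^ 2 / ((4 : ℝ) ^ σ - 1) * hsNorm σ f ^ 2 := by
  have summable_block (n : ℕ) :
      Summable fun k => ((4 : ℝ) ^ σ) ^ n * (wt 0 k * ‖mult (block n) f k‖ ^ 2) :=
    Summable.mul_left _ ((hf.mono hσ.le).mult (abs_block_le_one n))
  simp only [hsNorm_sq, ← tsum_mul_left]
  rw [← Summable.tsum_finsetSum fun n _ => summable_block n]
  refine (summable_sum fun n _ => summable_block n).tsum_le_tsum (fun k => ?_) (hf.mul_left _)
  calc ∑ n ∈ Finset.range N, ((4 : ℝ) ^ σ) ^ n * (wt 0 k * ‖mult (block n) f k‖ ^ 2)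
      = (∑ n ∈ Finset.range N, ((4 : ℝ) ^ σ) ^ n * block n k ^ 2) * ‖f k‖ ^ 2 := by
        simp only [wt_zero, norm_mult_apply, Finset.sum_mul, mul_pow, sq_abs, one_mul, mul_assoc]
    _ ≤ ((4 : ℝ) ^ σ) ^ 2 / ((4 : ℝ) ^ σ - 1) * wt σ k * ‖f k‖ ^ 2 := by
        gcongr
        exact sum_pow_mul_block_sq_le hσ N k
    _ = _ := mul_assoc _ _ _

end DyadicSums

section Moser

variable {σ : ℝ} {f g : FC}

lemma one_add_sq_le_of_mul_block_lowPass_ne_zero {l n : ℕ} (hl : l ≤ n + 1) {k : ℤ}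
    (hk : mul (mult (block n) f) (mult (lowPass l) g) k ≠ 0) : 1 + (k : ℝ) ^ 2 ≤ 17 * 4 ^ n := by
  have block_support (j : ℤ) (hj : 2 ^ (n + 1) ≤ |j|) : mult (block n) f j = 0 := by
    rw [mult, block_eq_zero hj, Complex.ofReal_zero, zero_mul]
  have lowPass_support (j : ℤ) (hj : 2 ^ (n + 1) ≤ |j|) : mult (lowPass l) g j = 0 := by
    rw [mult, lowPass_eq_zero ((pow_le_pow_right₀ one_le_two hl).trans hj), Complex.ofReal_zero,
      zero_mul]
  have abs_lt : |k| < 2 ^ (n + 1) + 2 ^ (n + 1) :=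
    not_le.1 fun h => hk (mul_eq_zero_of_add_le_abs block_support lowPass_support h)
  have abs_le : |(k : ℝ)| ≤ 4 * 2 ^ n := by
    have : ((|k| : ℤ) : ℝ) < ((2 ^ (n + 1) + 2 ^ (n + 1) : ℤ) : ℝ) := Int.cast_lt.2 abs_lt
    push_cast at this
    linarith [pow_succ (2 : ℝ) n]
  have sq_le : (k : ℝ) ^ 2 ≤ 16 * 4 ^ n := calc
    (k : ℝ) ^ 2 = |(k : ℝ)| ^ 2 := (sq_abs _).symm
    _ ≤ (4 * 2 ^ n) ^ 2 := by gcongr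
    _ = 16 * 4 ^ n := by rw [mul_pow, ← pow_mul, mul_comm n, pow_mul]; norm_num
  linarith [one_le_pow₀ (n := n) (by norm_num : (1 : ℝ) ≤ 4)]

lemma exists_paraproduct_bound (hσ : 0 < σ) :
    ∃ C > (0 : ℝ), ∀ f g : FC, memWiener f → memWiener g → memHs σ f →
      ∀ l : ℕ → ℕ, (∀ n, l n ≤ n + 1) → ∀ N,
        memHs σ (∑ n ∈ Finset.range N, mul (mult (block n) f) (mult (lowPass (l n)) g)) ∧
        hsNorm σ (∑ n ∈ Finset.range N, mul (mult (block n) f) (mult (lowPass (l n)) g)) ≤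
          C * (hsNorm σ f * linfty g) := by
  have hq : 1 < (4 : ℝ) ^ σ := Real.one_lt_rpow (by norm_num) hσ
  set K₁ := (17 : ℝ) ^ σ * (1 - ((4 : ℝ) ^ σ)⁻¹)⁻¹
  have hK₁ : 0 < K₁ :=
    mul_pos (by positivity) (inv_pos.2 (sub_pos.2 (inv_lt_one_of_one_lt₀ hq)))
  set K₂ := ((4 : ℝ) ^ σ) ^ 2 / ((4 : ℝ) ^ σ - 1)
  have hK₂ : 0 < K₂ := div_pos (by positivity) (sub_pos.2 hq)
  refine ⟨√(K₁ * K₂) * √3, by positivity, fun f g hf hg hfσ l hl N => ?_⟩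
  have block_mem (n : ℕ) : memWiener (mult (block n) f) := hf.mult (abs_block_le_one n)
  have lowPass_mem (n : ℕ) : memWiener (mult (lowPass (l n)) g) := hg.mult (abs_lowPass_le_one _)
  have term_le (n : ℕ) : hsNorm 0 (mul (mult (block n) f) (mult (lowPass (l n)) g)) ≤
      hsNorm 0 (mult (block n) f) * (√3 * linfty g) :=
    (hsNorm_zero_mul_le (block_mem n) (lowPass_mem n)).trans
      (mul_le_mul_of_nonneg_left (linfty_mult_lowPass_le _ hg) (hsNorm_nonneg _ _))
  obtain ⟨sum_mem, sum_le⟩ := memHs_and_hsNorm_sq_sum_le hσ (by norm_num : (0 : ℝ) ≤ 17)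
    (fun n => ((block_mem n).mul (lowPass_mem n)).memHs_zero)
    (fun n k => one_add_sq_le_of_mul_block_lowPass_ne_zero (hl n)) N
  have rhs_nonneg : 0 ≤ √(K₁ * K₂) * √3 * (hsNorm σ f * linfty g) :=
    mul_nonneg (by positivity) (mul_nonneg (hsNorm_nonneg σ f) (linfty_nonneg g))
  refine ⟨sum_mem, le_of_sq_le_sq (sum_le.trans ?_) rhs_nonneg⟩
  calc K₁ * ∑ n ∈ Finset.range N, ((4 : ℝ) ^ σ) ^ n *
        hsNorm 0 (mul (mult (block n) f) (mult (lowPass (l n)) g)) ^ 2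
      ≤ K₁ * ∑ n ∈ Finset.range N, ((4 : ℝ) ^ σ) ^ n *
          (hsNorm 0 (mult (block n) f) * (√3 * linfty g)) ^ 2 := by
        gcongr with n
        · exact hsNorm_nonneg _ _
        · exact term_le n
    _ = K₁ * (√3 * linfty g) ^ 2 *
          ∑ n ∈ Finset.range N, ((4 : ℝ) ^ σ) ^ n * hsNorm 0 (mult (block n) f) ^ 2 := by
        simp only [mul_pow, Finset.mul_sum]
        exact Finset.sum_congr rfl fun n _ => by ring
    _ ≤ K₁ * (√3 * linfty g) ^ 2 * (K₂ * hsNorm σ f ^ 2) := by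
        gcongr
        exact sum_pow_mul_hsNorm_block_sq_le hσ hfσ N
    _ = (√(K₁ * K₂) * √3 * (hsNorm σ f * linfty g)) ^ 2 := by
        simp only [mul_pow, Real.sq_sqrt (mul_pos hK₁ hK₂).le]
        ring

lemma mul_lowPass_eq_sum (hf : memWiener f) (hg : memWiener g) (N : ℕ) :
    mul (mult (lowPass N) f) (mult (lowPass N) g) =
      (∑ n ∈ Finset.range N, mul (mult (block n) f) (mult (lowPass (n + 1)) g)) +
        ∑ n ∈ Finset.range N, mul (mult (block n) g) (mult (lowPass n) f) := by
  have lowPass_mem {c : FC} (hc : memWiener c) (n : ℕ) : memWiener (mult (lowPass n) c) :=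
    hc.mult (abs_lowPass_le_one n)
  have initial : mul (mult (lowPass 0) f) (mult (lowPass 0) g) = 0 := by
    ext k
    simp [mul, mult, lowPass]
  rw [← sub_zero (mul _ _), ← initial, ← Finset.sum_range_sub fun n =>
    mul (mult (lowPass n) f) (mult (lowPass n) g), ← Finset.sum_add_distrib]
  refine Finset.sum_congr rfl fun n _ => ?_
  rw [mul_sub_mul (lowPass_mem hf _) (lowPass_mem hg _) (lowPass_mem hf _) (lowPass_mem hg _),
    mult_block, mult_block, FC.mul_comm (mult (lowPass n) f)]

theorem exists_moser_bound (hσ : 0 < σ) :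
    ∃ C > (0 : ℝ), ∀ f g : FC, memWiener f → memWiener g → memHs σ f → memHs σ g →
      memHs σ (mul f g) ∧
      hsNorm σ (mul f g) ≤ C * (hsNorm σ f * linfty g + hsNorm σ g * linfty f) := by
  obtain ⟨C, hC, paraproduct⟩ := exists_paraproduct_bound hσ
  refine ⟨C, hC, fun f g hf hg hfσ hgσ => ?_⟩
  have truncated (N : ℕ) : memHs σ (mul (mult (lowPass N) f) (mult (lowPass N) g)) ∧
      hsNorm σ (mul (mult (lowPass N) f) (mult (lowPass N) g)) ≤
        C * (hsNorm σ f * linfty g + hsNorm σ g * linfty f) := by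
    obtain ⟨mem₁, le₁⟩ := paraproduct f g hf hg hfσ (· + 1) (fun _ => le_rfl) N
    obtain ⟨mem₂, le₂⟩ := paraproduct g f hg hf hgσ id (fun n => n.le_succ) N
    rw [mul_lowPass_eq_sum hf hg, mul_add]
    exact ⟨mem₁.add mem₂, (hsNorm_add_le mem₁ mem₂).trans (add_le_add le₁ le₂)⟩
  have bound_nonneg := (hsNorm_nonneg _ _).trans (truncated 0).2
  obtain ⟨mem, sq_le⟩ := memHs_and_hsNorm_sq_le_of_tendsto
    (tendsto_mul_mult abs_lowPass_le_one tendsto_lowPass hf hg) (fun N => (truncated N).1)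
    fun N => pow_le_pow_left₀ (hsNorm_nonneg _ _) (truncated N).2 2
  exact ⟨mem, le_of_sq_le_sq sq_le bound_nonneg⟩

end Moser

section SobolevEmbedding

variable {σ : ℝ} {c : FC}

lemma summable_wt_neg (hσ : 1 / 2 < σ) : Summable (wt (-σ)) := by
  have summable_rpow := Real.summable_abs_int_rpow (b := 2 * σ) (by linarith)
  refine Summable.of_norm_bounded_eventually summable_rpow ?_
  filter_upwards [(Set.finite_singleton (0 : ℤ)).compl_mem_cofinite] with k hk
  have abs_pos : 0 < |(k : ℝ)| := abs_pos.2 (Int.cast_ne_zero.2 hk)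
  rw [Real.norm_of_nonneg (wt_pos _ k).le, neg_mul_eq_mul_neg, Real.rpow_mul abs_pos.le, wt]
  refine Real.rpow_le_rpow_of_nonpos (by positivity) ?_ (by linarith)
  rw [Real.rpow_two, sq_abs]
  linarith

lemma sum_norm_le (hσ : 1 / 2 < σ) (hc : memHs σ c) (F : Finset ℤ) :
    ∑ k ∈ F, ‖c k‖ ≤ √(∑' k, wt (-σ) k) * hsNorm σ c := by
  have norm_sq_eq (k : ℤ) : ‖c k‖ ^ 2 = wt (-σ) k * (wt σ k * ‖c k‖ ^ 2) := by
    rw [← mul_assoc, wt, wt, ← Real.rpow_add (by positivity), neg_add_cancel, Real.rpow_zero,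
      one_mul]
  refine le_of_sq_le_sq ?_ (mul_nonneg (Real.sqrt_nonneg _) (hsNorm_nonneg σ c))
  calc (∑ k ∈ F, ‖c k‖) ^ 2
      ≤ (∑ k ∈ F, wt (-σ) k) * ∑ k ∈ F, wt σ k * ‖c k‖ ^ 2 :=
        Finset.sum_sq_le_sum_mul_sum_of_sq_le_mul F (fun k _ => (wt_pos _ k).le)
          (fun k _ => wt_mul_sq_nonneg σ c k) fun k _ => (norm_sq_eq k).le
    _ ≤ (∑' k, wt (-σ) k) * hsNorm σ c ^ 2 :=
        mul_le_mul ((summable_wt_neg hσ).sum_le_tsum F fun k _ => (wt_pos _ k).le) (hc.sum_le F)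
          (Finset.sum_nonneg fun k _ => wt_mul_sq_nonneg σ c k)
          (tsum_nonneg fun k => (wt_pos _ k).le)
    _ = (√(∑' k, wt (-σ) k) * hsNorm σ c) ^ 2 := by
        rw [mul_pow, Real.sq_sqrt (tsum_nonneg fun k => (wt_pos _ k).le)]

lemma memHs.memWiener (hc : memHs σ c) (hσ : 1 / 2 < σ) : memWiener c :=
  summable_of_sum_le (fun _ => norm_nonneg _) (sum_norm_le hσ hc)

lemma linfty_le_hsNorm (hσ : 1 / 2 < σ) (hc : memHs σ c) :
    linfty c ≤ √(∑' k, wt (-σ) k) * hsNorm σ c :=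
  (linfty_le_tsum (hc.memWiener hσ)).trans
    (Summable.tsum_le_of_sum_le (hc.memWiener hσ) (sum_norm_le hσ hc))

theorem exists_algebra_bound (hσ : 1 / 2 < σ) :
    ∃ L > (0 : ℝ), ∀ f g : FC, memHs σ f → memHs σ g →
      memHs σ (mul f g) ∧ hsNorm σ (mul f g) ≤ L * (hsNorm σ f * hsNorm σ g) := by
  obtain ⟨C, hC, moser⟩ := exists_moser_bound (σ := σ) (by linarith)
  set S := √(∑' k, wt (-σ) k)
  have hS : 0 < S := Real.sqrt_pos.2
    ((summable_wt_neg hσ).tsum_pos (fun k => (wt_pos _ k).le) 0 (wt_pos _ 0))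
  refine ⟨2 * C * S, by positivity, fun f g hf hg => ?_⟩
  obtain ⟨mem, le⟩ := moser f g (hf.memWiener hσ) (hg.memWiener hσ) hf hg
  refine ⟨mem, ?_⟩
  calc hsNorm σ (mul f g) ≤ C * (hsNorm σ f * linfty g + hsNorm σ g * linfty f) := le
    _ ≤ C * (hsNorm σ f * (S * hsNorm σ g) + hsNorm σ g * (S * hsNorm σ f)) := by
        have hf0 := hsNorm_nonneg σ f
        have hg0 := hsNorm_nonneg σ g
        gcongr
        · exact linfty_le_hsNorm hσ hg
        · exact linfty_le_hsNorm hσ hf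
    _ = 2 * C * S * (hsNorm σ f * hsNorm σ g) := by ring

lemma exists_mul_le_of_le (hσ : 1 / 2 < σ) :
    ∃ C > (0 : ℝ), ∀ (f g : FC) {N W : ℝ}, memHs σ f → memHs σ g →
      hsNorm σ f ≤ N → hsNorm σ g ≤ N → linfty f ≤ W → linfty g ≤ W →
      memHs σ (mul f g) ∧ hsNorm σ (mul f g) ≤ C * (W * N) := by
  obtain ⟨C, hC, moser⟩ := exists_moser_bound (σ := σ) (by linarith)
  refine ⟨2 * C, by positivity, fun f g N W hf hg hfN hgN hfW hgW => ?_⟩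
  obtain ⟨mem, le⟩ := moser f g (hf.memWiener hσ) (hg.memWiener hσ) hf hg
  refine ⟨mem, le.trans ?_⟩
  have hN : 0 ≤ N := (hsNorm_nonneg _ _).trans hfN
  calc C * (hsNorm σ f * linfty g + hsNorm σ g * linfty f)
      ≤ C * (N * W + N * W) := by
        gcongr
        · exact linfty_nonneg g
        · exact linfty_nonneg f
    _ = 2 * C * (W * N) := by ring

lemma linfty_le_w1infty (c : FC) : linfty c ≤ w1infty c :=
  le_add_of_nonneg_right (linfty_nonneg _)

lemma linfty_D1_le_w1infty (c : FC) : linfty (D1 c) ≤ w1infty c :=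
  le_add_of_nonneg_left (linfty_nonneg _)

end SobolevEmbedding

section Nonlinearity

variable {s : ℝ} {u η v ρ : FC}

/-- The bilinear map whose restriction to the diagonal `(v, ρ) = (u, η)` is `Gfun`. -/
def Gpol (u η v ρ : FC) : FC :=
  D1 (helmInv ((1 / 2 : ℝ) • mul u v + mul (D1 u) (D1 v) + (1 / 2 : ℝ) • mul η ρ))

lemma memHs_and_hsNorm_Gpol_le {B : ℝ}
    (huv : memHs (s - 1) (mul u v) ∧ hsNorm (s - 1) (mul u v) ≤ B)
    (hD : memHs (s - 1) (mul (D1 u) (D1 v)) ∧ hsNorm (s - 1) (mul (D1 u) (D1 v)) ≤ B)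
    (hηρ : memHs (s - 1) (mul η ρ) ∧ hsNorm (s - 1) (mul η ρ) ≤ B) :
    memHs s (Gpol u η v ρ) ∧ hsNorm s (Gpol u η v ρ) ≤ 2 * B := by
  have huv' := huv.1.const_smul (1 / 2)
  have hηρ' := hηρ.1.const_smul (1 / 2)
  have hsum := (huv'.add hD.1).add hηρ'
  refine ⟨hsum.D1_helmInv, (hsNorm_D1_helmInv_le hsum).trans ?_⟩
  have split₁ := hsNorm_add_le (huv'.add hD.1) hηρ'
  have split₂ := hsNorm_add_le huv' hD.1
  rw [hsNorm_smul, abs_of_pos one_half_pos] at split₁ split₂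
  linarith [huv.2, hD.2, hηρ.2]

lemma Gfun_sub_Gfun (hu : memWiener u) (hu' : memWiener (D1 u)) (hη : memWiener η)
    (hv : memWiener v) (hv' : memWiener (D1 v)) (hρ : memWiener ρ) :
    Gfun u η - Gfun v ρ = Gpol (u - v) (η - ρ) u η + Gpol v ρ (u - v) (η - ρ) := by
  rw [sub_eq_iff_eq_add, Gfun, Gfun, Gpol, Gpol, ← D1_helmInv_add, ← D1_helmInv_add, D1_sub,
    eq_add_of_sub_eq (mul_sub_mul hu hu hv hv), eq_add_of_sub_eq (mul_sub_mul hu' hu' hv' hv'),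
    eq_add_of_sub_eq (mul_sub_mul hη hη hρ hρ)]
  congr 2
  module

theorem exists_pairNorm_le (hs : 3 / 2 < s) :
    ∃ C > (0 : ℝ), ∀ u η : FC, memHs s u → memHs (s - 1) η →
      memHs s (Gfun u η) ∧ memHs (s - 1) (mul η (D1 u)) ∧
      pairNorm s (s - 1) (Gfun u η) (mul η (D1 u)) ≤
        C * (w1infty u + linfty η) * pairNorm s (s - 1) u η := by
  have hσ : 1 / 2 < s - 1 := by linarith
  obtain ⟨C, hC, mul_le⟩ := exists_mul_le_of_le hσ
  refine ⟨3 * C, by positivity, fun u η hu hη => ?_⟩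
  set W := w1infty u + linfty η
  set N := pairNorm s (s - 1) u η
  have hu₁ : memHs (s - 1) u := hu.mono (sub_one_lt s).le
  have u_le : hsNorm (s - 1) u ≤ N :=
    (hsNorm_mono hu (sub_one_lt s).le).trans (hsNorm_le_pairNorm_left _ _ _ _)
  have D1_le : hsNorm (s - 1) (D1 u) ≤ N :=
    (hsNorm_D1_le hu).trans (hsNorm_le_pairNorm_left _ _ _ _)
  have η_le : hsNorm (s - 1) η ≤ N := hsNorm_le_pairNorm_right _ _ _ _
  have linfty_u_le : linfty u ≤ W := le_add_of_le_of_nonneg (linfty_le_w1infty u) (linfty_nonneg η)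
  have linfty_D1_le : linfty (D1 u) ≤ W :=
    le_add_of_le_of_nonneg (linfty_D1_le_w1infty u) (linfty_nonneg η)
  have linfty_η_le : linfty η ≤ W :=
    le_add_of_nonneg_left ((linfty_nonneg u).trans (linfty_le_w1infty u))
  obtain ⟨G_mem, G_le⟩ : memHs s (Gfun u η) ∧ hsNorm s (Gfun u η) ≤ 2 * (C * (W * N)) :=
    memHs_and_hsNorm_Gpol_le (mul_le u u hu₁ hu₁ u_le u_le linfty_u_le linfty_u_le)
      (mul_le _ _ hu.D1 hu.D1 D1_le D1_le linfty_D1_le linfty_D1_le)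
      (mul_le η η hη hη η_le η_le linfty_η_le linfty_η_le)
  obtain ⟨ηD1_mem, ηD1_le⟩ := mul_le η (D1 u) hη hu.D1 η_le D1_le linfty_η_le linfty_D1_le
  exact ⟨G_mem, ηD1_mem, (pairNorm_le_add _ _ _ _).trans (by linarith)⟩

lemma exists_bilinear_bound (hs : 3 / 2 < s) :
    ∃ L > (0 : ℝ), ∀ u η v ρ : FC,
      memHs s u → memHs (s - 1) η → memHs s v → memHs (s - 1) ρ →
      (memHs s (Gpol u η v ρ) ∧ hsNorm s (Gpol u η v ρ) ≤
        2 * (L * (pairNorm s (s - 1) u η * pairNorm s (s - 1) v ρ))) ∧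
      memHs (s - 1) (mul η (D1 v)) ∧ hsNorm (s - 1) (mul η (D1 v)) ≤
        L * (pairNorm s (s - 1) u η * pairNorm s (s - 1) v ρ) := by
  obtain ⟨L, hL, algebra⟩ := exists_algebra_bound (σ := s - 1) (by linarith)
  refine ⟨L, hL, fun u η v ρ hu hη hv hρ => ?_⟩
  set M := pairNorm s (s - 1) u η
  set N := pairNorm s (s - 1) v ρ
  have mul_bound {f g : FC} (hf : memHs (s - 1) f) (hg : memHs (s - 1) g)
      (hfM : hsNorm (s - 1) f ≤ M) (hgN : hsNorm (s - 1) g ≤ N) :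
      memHs (s - 1) (mul f g) ∧ hsNorm (s - 1) (mul f g) ≤ L * (M * N) := by
    obtain ⟨mem, le⟩ := algebra f g hf hg
    refine ⟨mem, le.trans ?_⟩
    have := (hsNorm_nonneg _ _).trans hfM
    have := hsNorm_nonneg (s - 1) g
    gcongr
  have component_le {c : FC} (d : FC) (hc : memHs s c) :
      hsNorm (s - 1) c ≤ pairNorm s (s - 1) c d ∧ hsNorm (s - 1) (D1 c) ≤ pairNorm s (s - 1) c d :=
    ⟨(hsNorm_mono hc (sub_one_lt s).le).trans (hsNorm_le_pairNorm_left _ _ _ _),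
      (hsNorm_D1_le hc).trans (hsNorm_le_pairNorm_left _ _ _ _)⟩
  exact ⟨memHs_and_hsNorm_Gpol_le
      (mul_bound (hu.mono (sub_one_lt s).le) (hv.mono (sub_one_lt s).le) (component_le η hu).1
        (component_le ρ hv).1)
      (mul_bound hu.D1 hv.D1 (component_le η hu).2 (component_le ρ hv).2)
      (mul_bound hη hρ (hsNorm_le_pairNorm_right _ _ _ _) (hsNorm_le_pairNorm_right _ _ _ _)),
    mul_bound hη hv.D1 (hsNorm_le_pairNorm_right _ _ _ _) (component_le ρ hv).2⟩

theorem exists_pairNorm_sub_le (hs : 3 / 2 < s) :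
    ∃ C > (0 : ℝ), ∀ u η v ρ : FC,
      memHs s u → memHs (s - 1) η → memHs s v → memHs (s - 1) ρ →
      pairNorm s (s - 1) (Gfun u η - Gfun v ρ) (mul η (D1 u) - mul ρ (D1 v)) ≤
        C * (pairNorm s (s - 1) u η + pairNorm s (s - 1) v ρ) *
          pairNorm s (s - 1) (u - v) (η - ρ) := by
  have hσ : 1 / 2 < s - 1 := by linarith
  obtain ⟨L, hL, bilinear⟩ := exists_bilinear_bound hs
  refine ⟨3 * L, by positivity, fun u η v ρ hu hη hv hρ => ?_⟩
  have hu₁ := hu.mono (sub_one_lt s).le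
  have hv₁ := hv.mono (sub_one_lt s).le
  obtain ⟨⟨memG₁, leG₁⟩, mem₁, le₁⟩ :=
    bilinear (u - v) (η - ρ) u η (hu.sub hv) (hη.sub hρ) hu hη
  obtain ⟨⟨memG₂, leG₂⟩, mem₂, le₂⟩ :=
    bilinear v ρ (u - v) (η - ρ) hv hρ (hu.sub hv) (hη.sub hρ)
  rw [Gfun_sub_Gfun (hu₁.memWiener hσ) (hu.D1.memWiener hσ) (hη.memWiener hσ) (hv₁.memWiener hσ)
      (hv.D1.memWiener hσ) (hρ.memWiener hσ),
    mul_sub_mul (hη.memWiener hσ) (hu.D1.memWiener hσ) (hρ.memWiener hσ) (hv.D1.memWiener hσ),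
    ← D1_sub]
  have G_le := hsNorm_add_le memG₁ memG₂
  have transport_le := hsNorm_add_le mem₁ mem₂
  exact (pairNorm_le_add _ _ _ _).trans (by linarith)

end Nonlinearity

end FC

theorem statement1_general (s : ℝ) (hs : 3 / 2 < s) :
    ∃ C > (0 : ℝ), ∀ u η v ρ : FC,
      FC.memHs s u → FC.memHs (s - 1) η → FC.memHs s v → FC.memHs (s - 1) ρ →
      FC.memHs s (Gfun u η) ∧ FC.memHs (s - 1) (FC.mul η (FC.D1 u)) ∧
      (FC.pairNorm s (s - 1) (-(Gfun u η)) (-(FC.mul η (FC.D1 u)))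
          ≤ C * (FC.w1infty u + FC.linfty η) * FC.pairNorm s (s - 1) u η) ∧
      (FC.pairNorm s (s - 1) (-(Gfun u η) - -(Gfun v ρ))
          (-(FC.mul η (FC.D1 u)) - -(FC.mul ρ (FC.D1 v)))
        ≤ C * (FC.pairNorm s (s - 1) u η + FC.pairNorm s (s - 1) v ρ)
            * FC.pairNorm s (s - 1) (u - v) (η - ρ)) := by
  obtain ⟨C₁, hC₁, growth⟩ := FC.exists_pairNorm_le hs
  obtain ⟨C₂, -, lipschitz⟩ := FC.exists_pairNorm_sub_le hs
  refine ⟨max C₁ C₂, lt_max_of_lt_left hC₁, fun u η v ρ hu hη hv hρ => ?_⟩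
  obtain ⟨G_mem, transport_mem, le⟩ := growth u η hu hη
  rw [← neg_sub', ← neg_sub', FC.pairNorm_neg, FC.pairNorm_neg]
  refine ⟨G_mem, transport_mem, le.trans ?_, (lipschitz u η v ρ hu hη hv hρ).trans ?_⟩
  · have := FC.pairNorm_nonneg s (s - 1) u η
    have := add_nonneg ((FC.linfty_nonneg u).trans (FC.linfty_le_w1infty u)) (FC.linfty_nonneg η)
    gcongr
    exact le_max_left C₁ C₂
  · have hN := FC.pairNorm_nonneg s (s - 1)
    have := add_nonneg (hN u η) (hN v ρ)
    have := hN (u - v) (η - ρ)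
    gcongr
    exact le_max_right C₁ C₂

/-- For `s > 5/2` and `b(u,η) = (−G(u,η), −η ∂ₓ u)`, there is `C = C(s) > 0`
such that for all `(u,η), (v,ρ) ∈ H^s(𝕋) × H^{s-1}(𝕋)`:
`‖b(X)‖ ≤ C (‖u‖_{W^{1,∞}} + ‖η‖_{W^{1,∞}}) ‖(u,η)‖` and
`‖b(X) − b(Y)‖ ≤ C (‖(u,η)‖ + ‖(v,ρ)‖) ‖(u−v, η−ρ)‖` (in `H^s×H^{s-1}`). -/
theorem statement1 (s : ℝ) (hs : 5 / 2 < s) :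
    ∃ C > (0 : ℝ), ∀ u η v ρ : FC,
      FC.memHs s u → FC.memHs (s - 1) η → FC.memHs s v → FC.memHs (s - 1) ρ →
      FC.isReal u → FC.isReal η → FC.isReal v → FC.isReal ρ →
      (FC.pairNorm s (s - 1) (-(Gfun u η)) (-(FC.mul η (FC.D1 u)))
          ≤ C * (FC.w1infty u + FC.w1infty η) * FC.pairNorm s (s - 1) u η) ∧
      (FC.pairNorm s (s - 1) (-(Gfun u η) - -(Gfun v ρ))
          (-(FC.mul η (FC.D1 u)) - -(FC.mul ρ (FC.D1 v)))
        ≤ C * (FC.pairNorm s (s - 1) u η + FC.pairNorm s (s - 1) v ρ)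
            * FC.pairNorm s (s - 1) (u - v) (η - ρ)) := by
  obtain ⟨C, hC, bounds⟩ := statement1_general s (by linarith)
  refine ⟨C, hC, fun u η v ρ hu hη hv hρ _ _ _ _ => ?_⟩
  obtain ⟨-, -, growth, lipschitz⟩ := bounds u η v ρ hu hη hv hρ
  refine ⟨growth.trans ?_, lipschitz⟩
  have := FC.pairNorm_nonneg s (s - 1) u η
  gcongr
  exact FC.linfty_le_w1infty η
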